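/- Assume Conditions 10, 11 and 12 hold. Then there exist n×n matrices D_{n,θ,j,k,ℓ} (for j,k,ℓ ∈ {1,…,p}, θ ∈ int Θ, n ∈ ℕ) such that the third-order partial derivatives of the cross-validation criterion satisfy ∂³M_n(θ)/∂θ_j∂θ_k∂θ_ℓ = (1/n) y^{(n)⊤} D_{n,θ,j,k,ℓ} y^{(n)}, and there is a constant C_D < ∞ such that for all n ∈ ℕ, max_{j,k,ℓ=1,…,p} sup_{θ∈int Θ} ρ₁(D_{n,θ,j,k,ℓ}) ≤ C_D, where ρ₁ denotes the largest singular value. -/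

import Mathlib

open MeasureTheory ProbabilityTheory Set Matrix

noncomputable section

/-- `ℝ^p` with the Euclidean norm. -/
abbrev Euc (p : ℕ) := EuclideanSpace ℝ (Fin p)

/-- Build a Euclidean vector from a plain function. -/
def toEuc {p : ℕ} (v : Fin p → ℝ) : Euc p := (WithLp.equiv 2 (Fin p → ℝ)).symm v

/-- The standard Gaussian distribution on `ℝ^p`. -/
def stdGaussian (p : ℕ) : Measure (Euc p) :=
  (Measure.pi fun _ : Fin p => gaussianReal 0 1).map (toEuc (p := p))

/-- The `L¹` Wasserstein distance between two distributions on `ℝ^p`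
(dual formulation: supremum over `1`-Lipschitz test functions). -/
def W1 {p : ℕ} (P Q : Measure (Euc p)) : ℝ :=
  sSup { r | ∃ f : Euc p → ℝ, LipschitzWith 1 f ∧
    r = |(∫ x, f x ∂P) - (∫ x, f x ∂Q)| }

/-- Partial derivative in the `i`-th coordinate direction. -/
def pder {p : ℕ} (i : Fin p) (f : Euc p → ℝ) (θ : Euc p) : ℝ :=
  fderiv ℝ f θ (EuclideanSpace.single i 1)

/-- The gradient as a Euclidean vector. -/
def gradVec {p : ℕ} (f : Euc p → ℝ) (θ : Euc p) : Euc p := toEuc fun i => pder i f θ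

/-- The correlation matrix `R_{n,θ}` with entries `k_θ(x_i − x_j)`. -/
def Rmat {d p : ℕ} (x : ℕ → Euc d) (kern : Euc p → Euc d → ℝ) (n : ℕ) (θ : Euc p) :
    Matrix (Fin n) (Fin n) ℝ :=
  Matrix.of fun i j => kern θ (x i - x j)

/-- `diag(M)`: set the off-diagonal entries of `M` to zero. -/
def diagPart {n : ℕ} (A : Matrix (Fin n) (Fin n) ℝ) : Matrix (Fin n) (Fin n) ℝ :=
  Matrix.diagonal A.diag

/-- The leave-one-out cross-validation criterion
`M_n(θ) = (1/n) yᵀ R_{n,θ}⁻¹ diag(R_{n,θ}⁻¹)⁻² R_{n,θ}⁻¹ y`. -/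
def CVcrit {d p : ℕ} (x : ℕ → Euc d) (kern : Euc p → Euc d → ℝ) (n : ℕ)
    (y : Fin n → ℝ) (θ : Euc p) : ℝ :=
  (1 / n) *
    (y ⬝ᵥ ((Rmat x kern n θ)⁻¹ * ((diagPart ((Rmat x kern n θ)⁻¹))⁻¹) ^ 2 *
      (Rmat x kern n θ)⁻¹).mulVec y)

/-- `opBound A C` means that the largest singular value of `A` is at most `C`. -/
def opBound {n : ℕ} (A : Matrix (Fin n) (Fin n) ℝ) (C : ℝ) : Prop :=
  ∀ v : Fin n → ℝ,
    Real.sqrt (∑ i, A.mulVec v i ^ 2) ≤ C * Real.sqrt (∑ i, v i ^ 2)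

section CVaux
open scoped Matrix.Norms.L2Operator

/-- Recursive class: `m` times differentiable with uniformly bounded partial derivatives. -/
def Good {p : ℕ} (U : Set (Euc p)) : ℕ → (∀ n : ℕ, Euc p → Matrix (Fin n) (Fin n) ℝ) → Prop
  | 0, F => ∃ C : ℝ, ∀ n, ∀ θ ∈ U, ‖F n θ‖ ≤ C
  | (m + 1), F => (∃ C : ℝ, ∀ n, ∀ θ ∈ U, ‖F n θ‖ ≤ C) ∧
      (∀ n, ∀ θ ∈ U, DifferentiableAt ℝ (F n) θ) ∧
      ∀ j : Fin p, Good U m (fun n θ => fderiv ℝ (F n) θ (EuclideanSpace.single j 1))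

lemma Good.bdd {p : ℕ} {U : Set (Euc p)} {m : ℕ} {F : ∀ n : ℕ, Euc p → Matrix (Fin n) (Fin n) ℝ}
    (h : Good U m F) : ∃ C : ℝ, ∀ n, ∀ θ ∈ U, ‖F n θ‖ ≤ C := by
  cases m with
  | zero => exact h
  | succ m => exact h.1

lemma Good.down {p : ℕ} {U : Set (Euc p)} {m : ℕ} :
    ∀ {F : ∀ n : ℕ, Euc p → Matrix (Fin n) (Fin n) ℝ}, Good U (m + 1) F → Good U m F := by
  induction m with
  | zero => intro F h; exact h.1
  | succ m ih => intro F h; exact ⟨h.1, h.2.1, fun j => ih (h.2.2 j)⟩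

lemma Good.congr {p : ℕ} {U : Set (Euc p)} (hU : IsOpen U) {m : ℕ} :
    ∀ {F G : ∀ n : ℕ, Euc p → Matrix (Fin n) (Fin n) ℝ}, Good U m F →
      (∀ n, ∀ θ ∈ U, G n θ = F n θ) → Good U m G := by
  induction m with
  | zero =>
    intro F G h e
    obtain ⟨C, hC⟩ := h
    exact ⟨C, fun n θ hθ => by rw [e n θ hθ]; exact hC n θ hθ⟩
  | succ m ih =>
    intro F G h e
    have ev : ∀ n, ∀ θ ∈ U, G n =ᶠ[nhds θ] F n := fun n θ hθ =>
      Filter.eventuallyEq_of_mem (hU.mem_nhds hθ) (fun t ht => e n t ht)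
    obtain ⟨⟨C, hC⟩, h2, h3⟩ := h
    refine ⟨⟨C, fun n θ hθ => by rw [e n θ hθ]; exact hC n θ hθ⟩, fun n θ hθ =>
      (h2 n θ hθ).congr_of_eventuallyEq (ev n θ hθ), fun j => ih (h3 j) ?_⟩
    intro n θ hθ
    rw [(ev n θ hθ).fderiv_eq]

lemma Good.add {p : ℕ} {U : Set (Euc p)} (hU : IsOpen U) {m : ℕ} :
    ∀ {F G : ∀ n : ℕ, Euc p → Matrix (Fin n) (Fin n) ℝ}, Good U m F → Good U m G →
      Good U m (fun n θ => F n θ + G n θ) := by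
  have hb : ∀ {F G : ∀ n : ℕ, Euc p → Matrix (Fin n) (Fin n) ℝ},
      (∃ C : ℝ, ∀ n, ∀ θ ∈ U, ‖F n θ‖ ≤ C) → (∃ C : ℝ, ∀ n, ∀ θ ∈ U, ‖G n θ‖ ≤ C) →
      ∃ C : ℝ, ∀ n, ∀ θ ∈ U, ‖F n θ + G n θ‖ ≤ C := by
    rintro F G ⟨C, hC⟩ ⟨D, hD⟩
    exact ⟨C + D, fun n θ hθ => (norm_add_le _ _).trans (add_le_add (hC n θ hθ) (hD n θ hθ))⟩
  induction m with
  | zero => intro F G h k; exact hb h k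
  | succ m ih =>
    intro F G h k
    refine ⟨hb h.1 k.1, fun n θ hθ => (h.2.1 n θ hθ).add (k.2.1 n θ hθ), fun j =>
      Good.congr hU (ih (h.2.2 j) (k.2.2 j)) ?_⟩
    intro n θ hθ
    have := ((h.2.1 n θ hθ).hasFDerivAt.add (k.2.1 n θ hθ).hasFDerivAt).fderiv
    exact congrArg (fun L => L (EuclideanSpace.single j 1)) this

lemma Good.neg {p : ℕ} {U : Set (Euc p)} (hU : IsOpen U) {m : ℕ} :
    ∀ {F : ∀ n : ℕ, Euc p → Matrix (Fin n) (Fin n) ℝ}, Good U m F →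
      Good U m (fun n θ => - F n θ) := by
  induction m with
  | zero => rintro F ⟨C, hC⟩; exact ⟨C, fun n θ hθ => by rw [norm_neg]; exact hC n θ hθ⟩
  | succ m ih =>
    intro F h
    obtain ⟨⟨C, hC⟩, h2, h3⟩ := h
    refine ⟨⟨C, fun n θ hθ => by rw [norm_neg]; exact hC n θ hθ⟩,
      fun n θ hθ => (h2 n θ hθ).neg, fun j => Good.congr hU (ih (h3 j)) ?_⟩
    intro n θ hθ
    have := (h2 n θ hθ).hasFDerivAt.neg.fderiv
    exact congrArg (fun L => L (EuclideanSpace.single j 1)) this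

lemma Good.mul {p : ℕ} {U : Set (Euc p)} (hU : IsOpen U) {m : ℕ} :
    ∀ {F G : ∀ n : ℕ, Euc p → Matrix (Fin n) (Fin n) ℝ}, Good U m F → Good U m G →
      Good U m (fun n θ => F n θ * G n θ) := by
  have hb : ∀ {F G : ∀ n : ℕ, Euc p → Matrix (Fin n) (Fin n) ℝ},
      (∃ C : ℝ, ∀ n, ∀ θ ∈ U, ‖F n θ‖ ≤ C) → (∃ C : ℝ, ∀ n, ∀ θ ∈ U, ‖G n θ‖ ≤ C) →
      ∃ C : ℝ, ∀ n, ∀ θ ∈ U, ‖F n θ * G n θ‖ ≤ C := by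
    rintro F G ⟨C, hC⟩ ⟨D, hD⟩
    exact ⟨C * D, fun n θ hθ => (norm_mul_le _ _).trans
      (mul_le_mul (hC n θ hθ) (hD n θ hθ) (norm_nonneg _) ((norm_nonneg _).trans (hC n θ hθ)))⟩
  induction m with
  | zero => intro F G h k; exact hb h k
  | succ m ih =>
    intro F G h k
    have key : ∀ n, ∀ θ ∈ U, HasFDerivAt (fun t => F n t * G n t) _ θ := fun n θ hθ =>
      (h.2.1 n θ hθ).hasFDerivAt.mul' (k.2.1 n θ hθ).hasFDerivAt
    refine ⟨hb h.1 k.1, fun n θ hθ => (key n θ hθ).differentiableAt, fun j =>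
      Good.congr hU (Good.add hU (ih h.down (k.2.2 j)) (ih (h.2.2 j) k.down)) ?_⟩
    intro n θ hθ
    rw [(key n θ hθ).fderiv]; rfl

lemma Good.inv {p : ℕ} {U : Set (Euc p)} (hU : IsOpen U)
    {F : ∀ n : ℕ, Euc p → Matrix (Fin n) (Fin n) ℝ}
    (hu : ∀ n, ∀ θ ∈ U, IsUnit (F n θ)) (hb : ∃ C : ℝ, ∀ n, ∀ θ ∈ U, ‖(F n θ)⁻¹‖ ≤ C)
    {m : ℕ} (h : Good U m F) : Good U m (fun n θ => (F n θ)⁻¹) := by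
  induction m with
  | zero => exact hb
  | succ m ih =>
    have key : ∀ n, ∀ θ ∈ U, ∃ L : Euc p →L[ℝ] Matrix (Fin n) (Fin n) ℝ,
        HasFDerivAt (fun t => (F n t)⁻¹) L θ ∧
        ∀ v, L v = -((F n θ)⁻¹ * fderiv ℝ (F n) θ v * (F n θ)⁻¹) := by
      intro n θ hθ
      obtain ⟨u, hu⟩ := hu n θ hθ
      have h1 := hasFDerivAt_ringInverse (𝕜 := ℝ) u
      rw [hu] at h1
      have h2 := h1.comp θ (h.2.1 n θ hθ).hasFDerivAt
      have hinv : ((u⁻¹ : (Matrix (Fin n) (Fin n) ℝ)ˣ) : Matrix (Fin n) (Fin n) ℝ) = (F n θ)⁻¹ := by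
        rw [← hu, Matrix.coe_units_inv]
      have e : (fun t => (F n t)⁻¹) = Ring.inverse ∘ F n := by
        funext t; simp [Matrix.nonsing_inv_eq_ringInverse]
      refine ⟨_, e ▸ h2, fun v => ?_⟩
      rw [hinv]; simp
    refine ⟨hb, fun n θ hθ => ?_, fun j => ?_⟩
    · obtain ⟨L, hL, -⟩ := key n θ hθ
      exact hL.differentiableAt
    · refine Good.congr hU (Good.neg hU (Good.mul hU (Good.mul hU (ih h.down) (h.2.2 j))
        (ih h.down))) ?_
      intro n θ hθ
      obtain ⟨L, hL, hv⟩ := key n θ hθ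
      rw [hL.fderiv, hv]

lemma norm_le_of_vec {n : ℕ} (A : Matrix (Fin n) (Fin n) ℝ) {C : ℝ} (hC : 0 ≤ C)
    (h : ∀ v : Euc n, ‖WithLp.toLp 2 (A *ᵥ v.ofLp)‖ ≤ C * ‖v‖) : ‖A‖ ≤ C := by
  rw [← Matrix.l2_opNorm_toEuclideanCLM]
  exact ContinuousLinearMap.opNorm_le_bound _ hC h

lemma vec_le_norm {n : ℕ} (A : Matrix (Fin n) (Fin n) ℝ) (v : Fin n → ℝ) :
    ‖(WithLp.toLp 2 (A *ᵥ v) : Euc n)‖ ≤ ‖A‖ * ‖(WithLp.toLp 2 v : Euc n)‖ := by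
  rw [← Matrix.l2_opNorm_toEuclideanCLM]
  exact (Matrix.toEuclideanCLM (n := Fin n) (𝕜 := ℝ) A).le_opNorm (WithLp.toLp 2 v)

lemma toLp_norm_sq {n : ℕ} (v : Fin n → ℝ) :
    ‖(WithLp.toLp 2 v : Euc n)‖ ^ 2 = ∑ i, v i ^ 2 := by
  rw [EuclideanSpace.norm_sq_eq]; simp

lemma opBound_of_norm {n : ℕ} (A : Matrix (Fin n) (Fin n) ℝ) {C : ℝ} (h : ‖A‖ ≤ C) :
    opBound A C := by
  intro v
  have h1 := vec_le_norm A v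
  rw [← toLp_norm_sq, ← toLp_norm_sq, Real.sqrt_sq (norm_nonneg _), Real.sqrt_sq (norm_nonneg _)]
  exact h1.trans (mul_le_mul_of_nonneg_right h (norm_nonneg _))

lemma entry_le_norm {n : ℕ} (A : Matrix (Fin n) (Fin n) ℝ) (i j : Fin n) : |A i j| ≤ ‖A‖ := by
  have h := vec_le_norm A (Pi.single j 1)
  have h1 : ‖(WithLp.toLp 2 (Pi.single j 1 : Fin n → ℝ) : Euc n)‖ = 1 := by
    simp
  rw [h1, mul_one] at h
  refine le_trans ?_ h
  have := PiLp.norm_apply_le (WithLp.toLp 2 (A *ᵥ Pi.single j 1) : Euc n) i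
  simpa using this

lemma diagPart_norm_le {n : ℕ} (A : Matrix (Fin n) (Fin n) ℝ) : ‖diagPart A‖ ≤ ‖A‖ := by
  rw [diagPart, Matrix.l2_opNorm_diagonal]
  exact (pi_norm_le_iff_of_nonneg (norm_nonneg _)).2 fun i => entry_le_norm A i i

/-- `diagPart` as a continuous linear map. -/
def diagL (n : ℕ) : Matrix (Fin n) (Fin n) ℝ →L[ℝ] Matrix (Fin n) (Fin n) ℝ :=
  LinearMap.toContinuousLinearMap
    { toFun := diagPart
      map_add' := fun A B => by simp [diagPart]
      map_smul' := fun c A => by simp [diagPart] }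

lemma Good.diag {p : ℕ} {U : Set (Euc p)} (hU : IsOpen U) {m : ℕ} :
    ∀ {F : ∀ n : ℕ, Euc p → Matrix (Fin n) (Fin n) ℝ}, Good U m F →
      Good U m (fun n θ => diagPart (F n θ)) := by
  induction m with
  | zero =>
    rintro F ⟨C, hC⟩
    exact ⟨C, fun n θ hθ => (diagPart_norm_le _).trans (hC n θ hθ)⟩
  | succ m ih =>
    intro F h
    obtain ⟨⟨C, hC⟩, h2, h3⟩ := h
    have key : ∀ n, ∀ θ ∈ U, HasFDerivAt (fun t => diagPart (F n t)) _ θ := fun n θ hθ =>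
      (diagL n).hasFDerivAt.comp θ (h2 n θ hθ).hasFDerivAt
    refine ⟨⟨C, fun n θ hθ => (diagPart_norm_le _).trans (hC n θ hθ)⟩,
      fun n θ hθ => (key n θ hθ).differentiableAt, fun j => Good.congr hU (ih (h3 j)) ?_⟩
    intro n θ hθ
    rw [(key n θ hθ).fderiv]; rfl

lemma coer_isUnit {n : ℕ} {A : Matrix (Fin n) (Fin n) ℝ} {c : ℝ} (hc : 0 < c)
    (h : ∀ v : Fin n → ℝ, c * (∑ i, v i ^ 2) ≤ v ⬝ᵥ A.mulVec v) : IsUnit A := by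
  rw [← Matrix.mulVec_injective_iff_isUnit]
  intro v w hvw
  have h1 := h (v - w)
  have h0 : A *ᵥ (v - w) = 0 := by rw [Matrix.mulVec_sub]; exact sub_eq_zero.2 hvw
  rw [h0, dotProduct_zero, ← toLp_norm_sq] at h1
  have h2 : ‖(WithLp.toLp 2 (v - w) : Euc n)‖ ^ 2 ≤ 0 := by
    by_contra hcon
    push Not at hcon
    nlinarith
  have h3 : ‖(WithLp.toLp 2 (v - w) : Euc n)‖ = 0 := by
    nlinarith [norm_nonneg (WithLp.toLp 2 (v - w) : Euc n)]
  have h4 := norm_eq_zero.1 h3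
  have h5 : v - w = 0 := congrArg WithLp.ofLp h4
  exact sub_eq_zero.1 h5

lemma dot_le {n : ℕ} (v w : Fin n → ℝ) :
    v ⬝ᵥ w ≤ ‖(WithLp.toLp 2 v : Euc n)‖ * ‖(WithLp.toLp 2 w : Euc n)‖ := by
  have := real_inner_le_norm (WithLp.toLp 2 v : Euc n) (WithLp.toLp 2 w)
  rw [EuclideanSpace.inner_eq_star_dotProduct] at this
  simpa [dotProduct_comm] using this

lemma coer_norm_inv {n : ℕ} {A : Matrix (Fin n) (Fin n) ℝ} {c : ℝ} (hc : 0 < c)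
    (h : ∀ v : Fin n → ℝ, c * (∑ i, v i ^ 2) ≤ v ⬝ᵥ A.mulVec v) : ‖A⁻¹‖ ≤ 1 / c := by
  have hu := coer_isUnit hc h
  have hd := (Matrix.isUnit_iff_isUnit_det A).1 hu
  refine norm_le_of_vec _ (by positivity) fun v => ?_
  have h1 := h (A⁻¹ *ᵥ v.ofLp)
  rw [Matrix.mulVec_mulVec, Matrix.mul_nonsing_inv _ hd, Matrix.one_mulVec, ← toLp_norm_sq] at h1
  have h2 := h1.trans (dot_le _ _)
  have e : (WithLp.toLp 2 v.ofLp : Euc n) = v := rfl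
  rw [e] at h2
  set a := ‖(WithLp.toLp 2 (A⁻¹ *ᵥ v.ofLp) : Euc n)‖ with ha
  have ha0 : 0 ≤ a := norm_nonneg _
  rw [one_div, inv_mul_eq_div, le_div_iff₀ hc]
  rcases ha0.eq_or_lt with h0 | h0
  · rw [← h0]; simp
  · have : a * (a * c) ≤ a * ‖v‖ := by nlinarith
    exact le_of_mul_le_mul_left this h0

lemma coer_inv {n : ℕ} {A : Matrix (Fin n) (Fin n) ℝ} {c K : ℝ} (hc : 0 < c) (hK : 0 < K)
    (hA : ‖A‖ ≤ K)
    (h : ∀ v : Fin n → ℝ, c * (∑ i, v i ^ 2) ≤ v ⬝ᵥ A.mulVec v) :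
    ∀ v : Fin n → ℝ, c / K ^ 2 * (∑ i, v i ^ 2) ≤ v ⬝ᵥ A⁻¹.mulVec v := by
  intro v
  have hu := coer_isUnit hc h
  have hd := (Matrix.isUnit_iff_isUnit_det A).1 hu
  have h1 := h (A⁻¹ *ᵥ v)
  have h2 := vec_le_norm A (A⁻¹ *ᵥ v)
  rw [Matrix.mulVec_mulVec, Matrix.mul_nonsing_inv _ hd, Matrix.one_mulVec] at h1 h2
  rw [← toLp_norm_sq] at h1 ⊢
  rw [dotProduct_comm]
  refine le_trans ?_ h1
  set a := ‖(WithLp.toLp 2 (A⁻¹ *ᵥ v) : Euc n)‖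
  set b := ‖(WithLp.toLp 2 v : Euc n)‖
  have ha0 : 0 ≤ a := norm_nonneg _
  have hb0 : 0 ≤ b := norm_nonneg _
  have h3 : b ≤ K * a := h2.trans (mul_le_mul_of_nonneg_right hA ha0)
  rw [div_mul_eq_mul_div, div_le_iff₀ (by positivity)]
  have : b ^ 2 ≤ (K * a) ^ 2 := pow_le_pow_left₀ hb0 h3 2
  nlinarith

lemma coer_diag {n : ℕ} {A : Matrix (Fin n) (Fin n) ℝ} {c : ℝ}
    (h : ∀ v : Fin n → ℝ, c * (∑ i, v i ^ 2) ≤ v ⬝ᵥ A.mulVec v) :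
    ∀ v : Fin n → ℝ, c * (∑ i, v i ^ 2) ≤ v ⬝ᵥ (diagPart A).mulVec v := by
  intro v
  have hi : ∀ i, c ≤ A i i := by
    intro i
    have := h (Pi.single i 1)
    simpa [Pi.single_apply] using this
  rw [diagPart, Finset.mul_sum, dotProduct]
  refine Finset.sum_le_sum fun i _ => ?_
  rw [Matrix.mulVec_diagonal, Matrix.diag]
  nlinarith [hi i, sq_nonneg (v i)]

lemma schur {n : ℕ} (A : Matrix (Fin n) (Fin n) ℝ) {K : ℝ} (hK : 0 ≤ K)
    (hr : ∀ i, ∑ j, |A i j| ≤ K) (hcol : ∀ j, ∑ i, |A i j| ≤ K) : ‖A‖ ≤ K := by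
  refine norm_le_of_vec _ hK fun v => ?_
  refine (sq_le_sq₀ (norm_nonneg _) (by positivity)).1 ?_
  rw [mul_pow, toLp_norm_sq, EuclideanSpace.norm_sq_eq]
  have h1 : ∀ i, (A *ᵥ v.ofLp) i ^ 2 ≤ K * ∑ j, |A i j| * v j ^ 2 := by
    intro i
    have hcs := Finset.sum_mul_sq_le_sq_mul_sq Finset.univ (fun j => √|A i j|)
      (fun j => √|A i j| * |v j|)
    have e1 : ∀ j, √|A i j| * (√|A i j| * |v j|) = |A i j * v j| := fun j => by
      rw [← mul_assoc, Real.mul_self_sqrt (abs_nonneg _), abs_mul]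
    have e2 : ∀ j, √|A i j| ^ 2 = |A i j| := fun j => Real.sq_sqrt (abs_nonneg _)
    simp only [e1, mul_pow, e2, sq_abs] at hcs
    have h2 : (A *ᵥ v.ofLp) i ^ 2 ≤ (∑ j, |A i j * v j|) ^ 2 := by
      rw [← sq_abs]
      refine pow_le_pow_left₀ (abs_nonneg _) ?_ 2
      exact Finset.abs_sum_le_sum_abs (fun j => A i j * v j) Finset.univ
    refine h2.trans (hcs.trans ?_)
    exact mul_le_mul_of_nonneg_right (hr i) (Finset.sum_nonneg fun j _ => by positivity)
  calc ∑ i, (A *ᵥ v.ofLp) i ^ 2 ≤ ∑ i, K * ∑ j, |A i j| * v j ^ 2 :=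
        Finset.sum_le_sum fun i _ => h1 i
    _ = K * ∑ j, (∑ i, |A i j|) * v j ^ 2 := by
        rw [← Finset.mul_sum, Finset.sum_comm]; simp only [Finset.sum_mul]
    _ ≤ K * ∑ j, K * v j ^ 2 := by
        refine mul_le_mul_of_nonneg_left (Finset.sum_le_sum fun j _ => ?_) hK
        exact mul_le_mul_of_nonneg_right (hcol j) (sq_nonneg _)
    _ = K ^ 2 * ∑ j, ‖v j‖ ^ 2 := by
        rw [← Finset.mul_sum]; simp only [Real.norm_eq_abs, sq_abs]; ring

lemma kern_ineq {t u r s : ℝ} (ht : 0 ≤ t) (hu : 0 ≤ u) (hr : 0 ≤ r) (hs : 0 ≤ s)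
    (h : u ≤ t + r) :
    1 / (1 + t ^ s) ≤ (2 * (1 + r)) ^ s * (1 + u) ^ (-s) := by
  have h1 : 1 + u ≤ (1 + r) * (1 + t) := by nlinarith
  have h2 : (1 + t) ^ s ≤ 2 ^ s * (1 + t ^ s) := by
    rcases le_total t 1 with h' | h'
    · calc (1 + t) ^ s ≤ 2 ^ s := Real.rpow_le_rpow (by linarith) (by linarith) hs
        _ ≤ _ := le_mul_of_one_le_right (by positivity) (by linarith [Real.rpow_nonneg ht s])
    · calc (1 + t) ^ s ≤ (2 * t) ^ s := Real.rpow_le_rpow (by linarith) (by linarith) hs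
        _ = 2 ^ s * t ^ s := Real.mul_rpow (by norm_num) ht
        _ ≤ _ := mul_le_mul_of_nonneg_left (by linarith) (by positivity)
  have h3 : (1 + u) ^ s ≤ (2 * (1 + r)) ^ s * (1 + t ^ s) := by
    calc (1 + u) ^ s ≤ ((1 + r) * (1 + t)) ^ s := Real.rpow_le_rpow (by linarith) h1 hs
      _ = (1 + r) ^ s * (1 + t) ^ s := Real.mul_rpow (by linarith) (by linarith)
      _ ≤ (1 + r) ^ s * (2 ^ s * (1 + t ^ s)) := mul_le_mul_of_nonneg_left h2 (by positivity)
      _ = _ := by rw [Real.mul_rpow (by norm_num) (by linarith)]; ring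
  have hp : 0 < (1 + u) ^ s := by positivity
  have hq : 0 < 1 + t ^ s := by positivity
  rw [Real.rpow_neg (by linarith), ← div_eq_mul_inv, div_le_div_iff₀ hq hp]
  linarith

lemma packing {d : ℕ} (x : ℕ → Euc d) {cx c : ℝ} (hcx : 0 < cx) (hc : 0 < c)
    (hmin : ∀ i j : ℕ, i ≠ j → cx ≤ ‖x i - x j‖) :
    ∃ K : ℝ, 0 ≤ K ∧ ∀ (n i : ℕ), ∑ j ∈ Finset.range n, 1 / (1 + ‖x i - x j‖ ^ ((d : ℝ) + c)) ≤ K := by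
  set s : ℝ := (d : ℝ) + c with hs
  have hs0 : 0 ≤ s := by positivity
  set r := cx / 2 with hr
  have hr0 : 0 < r := by positivity
  have hint : Integrable (fun y : Euc d => (1 + ‖y‖) ^ (-s)) volume := by
    apply integrable_one_add_norm
    rw [finrank_euclideanSpace_fin]; linarith
  set I := ∫ y : Euc d, (1 + ‖y‖) ^ (-s) with hI
  set V := volume.real (Metric.ball (0 : Euc d) r) with hV
  have hV0 : 0 < V := ENNReal.toReal_pos (Metric.measure_ball_pos _ _ hr0).ne'
    measure_ball_lt_top.ne
  have hI0 : 0 ≤ I := integral_nonneg fun y => by positivity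
  set B := (2 * (1 + r)) ^ s with hB
  have hB0 : 0 ≤ B := by positivity
  refine ⟨B * I / V, by positivity, fun n i => ?_⟩
  rw [le_div_iff₀ hV0, Finset.sum_mul]
  have hint' : Integrable (fun y : Euc d => B * (1 + ‖x i - y‖) ^ (-s)) volume :=
    (hint.comp_sub_left (x i)).const_mul B
  have h1 : ∀ j, 1 / (1 + ‖x i - x j‖ ^ s) * V ≤
      ∫ y in Metric.ball (x j) r, B * (1 + ‖x i - y‖) ^ (-s) := by
    intro j
    have : 1 / (1 + ‖x i - x j‖ ^ s) * V =
        ∫ y in Metric.ball (x j) r, 1 / (1 + ‖x i - x j‖ ^ s) := by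
      rw [setIntegral_const, Measure.addHaar_real_ball_center, smul_eq_mul, mul_comm]
    rw [this]
    refine setIntegral_mono_on (integrableOn_const measure_ball_lt_top.ne) hint'.integrableOn
      measurableSet_ball fun y hy => ?_
    refine kern_ineq (norm_nonneg _) (norm_nonneg _) hr0.le hs0 ?_
    have e : x i - y = (x i - x j) + (x j - y) := by abel
    rw [e]
    refine (norm_add_le _ _).trans ?_
    have : ‖x j - y‖ < r := by rw [← dist_eq_norm]; exact Metric.mem_ball'.1 hy
    linarith
  calc ∑ j ∈ Finset.range n, 1 / (1 + ‖x i - x j‖ ^ s) * V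
      ≤ ∑ j ∈ Finset.range n, ∫ y in Metric.ball (x j) r, B * (1 + ‖x i - y‖) ^ (-s) :=
        Finset.sum_le_sum fun j _ => h1 j
    _ = ∫ y in ⋃ j ∈ Finset.range n, Metric.ball (x j) r, B * (1 + ‖x i - y‖) ^ (-s) := by
        rw [integral_biUnion_finset]
        · intro j _; exact measurableSet_ball
        · intro j _ k _ hjk
          refine Metric.ball_disjoint_ball ?_
          rw [dist_eq_norm]; linarith [hmin j k hjk]
        · intro j _; exact hint'.integrableOn
    _ ≤ ∫ y, B * (1 + ‖x i - y‖) ^ (-s) :=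
        setIntegral_le_integral hint' (Filter.Eventually.of_forall fun y => by positivity)
    _ = B * I := by
        rw [integral_const_mul, integral_sub_left_eq_self (fun y : Euc d => (1 + ‖y‖) ^ (-s))]

lemma Rmat_bdd {d p : ℕ} {U : Set (Euc p)} (x : ℕ → Euc d) {cx c C : ℝ} (hcx : 0 < cx)
    (hc : 0 < c) (hC : 0 < C)
    (hmin : ∀ i j : ℕ, i ≠ j → cx ≤ ‖x i - x j‖) (g : Euc p → Euc d → ℝ)
    (hg : ∀ θ ∈ U, ∀ z, |g θ z| ≤ C / (1 + ‖z‖ ^ ((d : ℝ) + c))) :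
    ∃ K : ℝ, ∀ n, ∀ θ ∈ U, ‖Rmat x g n θ‖ ≤ K := by
  obtain ⟨K, hK0, hK⟩ := packing x hcx hc hmin
  have hb : ∀ n i : ℕ, ∑ j : Fin n, C / (1 + ‖x i - x j‖ ^ ((d : ℝ) + c)) ≤ C * K := by
    intro n i
    rw [Fin.sum_univ_eq_sum_range (fun j => C / (1 + ‖x i - x j‖ ^ ((d : ℝ) + c)))]
    refine le_trans (le_of_eq ?_) (mul_le_mul_of_nonneg_left (hK n i) hC.le)
    rw [Finset.mul_sum]
    exact Finset.sum_congr rfl fun j _ => by rw [mul_one_div]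
  refine ⟨C * K, fun n θ hθ => schur _ (by positivity) (fun i => ?_) (fun j => ?_)⟩
  · exact (Finset.sum_le_sum fun j _ => hg θ hθ _).trans (hb n i)
  · refine (Finset.sum_le_sum fun i _ => ?_).trans (hb n j)
    rw [norm_sub_rev]; exact hg θ hθ _

lemma Rmat_step {d p : ℕ} {U : Set (Euc p)} (hU : IsOpen U) (x : ℕ → Euc d)
    (g : Euc p → Euc d → ℝ) {m : ℕ}
    (hb : ∃ K : ℝ, ∀ n, ∀ θ ∈ U, ‖Rmat x g n θ‖ ≤ K)
    (hd : ∀ z, ∀ θ ∈ U, DifferentiableAt ℝ (fun t => g t z) θ)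
    (hm : ∀ j, Good U m (Rmat x (fun θ z => pder j (fun t => g t z) θ))) :
    Good U (m + 1) (Rmat x g) := by
  have key : ∀ n, ∀ θ ∈ U, HasFDerivAt (Rmat x g n)
      (∑ i : Fin n, ∑ j : Fin n, (fderiv ℝ (fun t => g t (x i - x j)) θ).smulRight
        (Matrix.single i j (1 : ℝ))) θ := by
    intro n θ hθ
    have e : Rmat x g n = fun t => ∑ i : Fin n, ∑ j : Fin n,
        g t (x i - x j) • Matrix.single i j (1 : ℝ) := by
      funext t
      conv_lhs => rw [Matrix.matrix_eq_sum_single (Rmat x g n t)]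
      simp [Rmat, Matrix.smul_single]
    rw [e]
    refine HasFDerivAt.fun_sum fun i _ => HasFDerivAt.fun_sum fun j _ => ?_
    exact (hd (x i - x j) θ hθ).hasFDerivAt.smul_const _
  refine ⟨hb, fun n θ hθ => (key n θ hθ).differentiableAt, fun j => Good.congr hU (hm j) ?_⟩
  intro n θ hθ
  rw [(key n θ hθ).fderiv]
  conv_rhs => rw [Matrix.matrix_eq_sum_single (Rmat x _ n θ)]
  simp [Rmat, pder, Matrix.smul_single]

lemma pder_contDiff {p : ℕ} {f : Euc p → ℝ} {θ : Euc p} {m : WithTop ℕ∞} (j : Fin p)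
    (h : ContDiffAt ℝ (m + 1) f θ) : ContDiffAt ℝ m (pder j f) θ :=
  (h.fderiv_right_succ).clm_apply contDiffAt_const

/-- the quadratic form as a continuous linear map -/
def quadL (n : ℕ) (y : Fin n → ℝ) : Matrix (Fin n) (Fin n) ℝ →L[ℝ] ℝ :=
  LinearMap.toContinuousLinearMap
    { toFun := fun A => (1 / n) * (y ⬝ᵥ A.mulVec y)
      map_add' := fun A B => by simp only [Matrix.add_mulVec, dotProduct_add]; ring
      map_smul' := fun c A => by
        simp only [Matrix.smul_mulVec, dotProduct_smul, smul_eq_mul, RingHom.id_apply]; ring }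

lemma pder_quad {p n : ℕ} {U : Set (Euc p)} (hU : IsOpen U) (y : Fin n → ℝ)
    {f : Euc p → ℝ} {F : Euc p → Matrix (Fin n) (Fin n) ℝ}
    (hd : ∀ θ ∈ U, DifferentiableAt ℝ F θ) (hf : ∀ θ ∈ U, f θ = quadL n y (F θ)) (j : Fin p) :
    ∀ θ ∈ U, pder j f θ = quadL n y (fderiv ℝ F θ (EuclideanSpace.single j 1)) := by
  intro θ hθ
  have ev : f =ᶠ[nhds θ] fun t => quadL n y (F t) :=
    Filter.eventuallyEq_of_mem (hU.mem_nhds hθ) (fun t ht => hf t ht)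
  have h := ((quadL n y).hasFDerivAt.comp θ (hd θ hθ).hasFDerivAt).fderiv
  have e : (fun t => quadL n y (F t)) = quadL n y ∘ F := rfl
  rw [pder, ev.fderiv_eq, e, h]; rfl

end CVaux


/-- Lemma C.4: the third derivatives of the cross-validation criterion are
quadratic forms with uniformly bounded matrices. -/
theorem CV_third_derivative_formula
    {d p : ℕ} (Θ : Set (Euc p)) (hΘcompact : IsCompact Θ)
    (x : ℕ → Euc d) (kern : Euc p → Euc d → ℝ)
    -- Condition 10 (minimal distance between observation points)
    (cx : ℝ) (hcx : 0 < cx) (hmindist : ∀ i j : ℕ, i ≠ j → cx ≤ ‖x i - x j‖)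
    -- Condition 11 (uniformly positive definite correlation matrices)
    (cR1 : ℝ) (hcR1 : 0 < cR1)
    (heigR : ∀ (n : ℕ), ∀ θ ∈ Θ, ∀ v : Fin n → ℝ,
      cR1 * (∑ i, v i ^ 2) ≤ v ⬝ᵥ (Rmat x kern n θ).mulVec v)
    -- Condition 12 (third-order smoothness in θ and decay of the correlation)
    (hsmooth : ∀ z : Euc d, ∀ θ ∈ interior Θ, ContDiffAt ℝ 3 (fun θ' => kern θ' z) θ)
    (CR2 cR2 : ℝ) (hCR2 : 0 < CR2) (hcR2 : 0 < cR2)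
    (hdecay : ∀ θ ∈ Θ, ∀ z : Euc d,
      |kern θ z| ≤ CR2 / (1 + ‖z‖ ^ ((d : ℝ) + cR2)))
    (hdecay1 : ∀ θ ∈ interior Θ, ∀ (z : Euc d) (j : Fin p),
      |pder j (fun θ' => kern θ' z) θ| ≤ CR2 / (1 + ‖z‖ ^ ((d : ℝ) + cR2)))
    (hdecay2 : ∀ θ ∈ interior Θ, ∀ (z : Euc d) (j k : Fin p),
      |pder k (pder j fun θ' => kern θ' z) θ| ≤ CR2 / (1 + ‖z‖ ^ ((d : ℝ) + cR2)))
    (hdecay3 : ∀ θ ∈ interior Θ, ∀ (z : Euc d) (j k l : Fin p),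
      |pder l (pder k (pder j fun θ' => kern θ' z)) θ|
        ≤ CR2 / (1 + ‖z‖ ^ ((d : ℝ) + cR2)))
    : ∃ Dmat : (n : ℕ) → Euc p → Fin p → Fin p → Fin p → Matrix (Fin n) (Fin n) ℝ,
      (∀ (n : ℕ), ∀ θ ∈ interior Θ, ∀ (j k l : Fin p) (y : Fin n → ℝ),
        pder l (pder k (pder j (CVcrit x kern n y))) θ
          = (1 / n) * (y ⬝ᵥ (Dmat n θ j k l).mulVec y)) ∧
      ∃ CD : ℝ, ∀ (n : ℕ), ∀ θ ∈ interior Θ, ∀ j k l : Fin p,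
        opBound (Dmat n θ j k l) CD := by
  have hU : IsOpen (interior Θ) := isOpen_interior
  have hsub : interior Θ ⊆ Θ := interior_subset
  have h3 : ∀ j k l, Good (interior Θ) 0 (Rmat x (fun θ z =>
      pder l (pder k (pder j fun θ' => kern θ' z)) θ)) := fun j k l =>
    Rmat_bdd x hcx hcR2 hCR2 hmindist _ fun θ hθ z => hdecay3 θ hθ z j k l
  have h2 : ∀ j k, Good (interior Θ) 1 (Rmat x (fun θ z =>
      pder k (pder j fun θ' => kern θ' z) θ)) := fun j k =>
    Rmat_step hU x _ (Rmat_bdd x hcx hcR2 hCR2 hmindist _ fun θ hθ z => hdecay2 θ hθ z j k)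
      (fun z θ hθ => ContDiffAt.differentiableAt (n := 1) (pder_contDiff k
        (pder_contDiff j ((hsmooth z θ hθ).of_le (by norm_num)))) (by norm_num)) (fun l => h3 j k l)
  have h1 : ∀ j, Good (interior Θ) 2 (Rmat x (fun θ z =>
      pder j (fun θ' => kern θ' z) θ)) := fun j =>
    Rmat_step hU x _ (Rmat_bdd x hcx hcR2 hCR2 hmindist _ fun θ hθ z => hdecay1 θ hθ z j)
      (fun z θ hθ => ContDiffAt.differentiableAt (n := 1)
        (pder_contDiff j ((hsmooth z θ hθ).of_le (by norm_num))) (by norm_num)) (fun l => h2 j l)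
  have hbd := Rmat_bdd (U := interior Θ) x hcx hcR2 hCR2 hmindist kern
    fun θ hθ z => hdecay θ (hsub hθ) z
  have h0 : Good (interior Θ) 3 (Rmat x kern) :=
    Rmat_step hU x _ hbd
      (fun z θ hθ => (hsmooth z θ hθ).differentiableAt (by norm_num)) h1
  obtain ⟨K, hK⟩ := hbd
  have hK1 : 0 < max K 1 := lt_max_of_lt_right one_pos
  have co : ∀ n, ∀ θ ∈ interior Θ, ∀ v : Fin n → ℝ,
      cR1 * (∑ i, v i ^ 2) ≤ v ⬝ᵥ (Rmat x kern n θ).mulVec v :=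
    fun n θ hθ => heigR n θ (hsub hθ)
  have cod : ∀ n, ∀ θ ∈ interior Θ, ∀ v : Fin n → ℝ,
      cR1 / (max K 1) ^ 2 * (∑ i, v i ^ 2) ≤ v ⬝ᵥ (diagPart (Rmat x kern n θ)⁻¹).mulVec v :=
    fun n θ hθ => coer_diag (coer_inv hcR1 hK1 ((hK n θ hθ).trans (le_max_left _ _)) (co n θ hθ))
  have hc2 : 0 < cR1 / (max K 1) ^ 2 := by positivity
  have g1 : Good (interior Θ) 3 (fun n θ => (Rmat x kern n θ)⁻¹) :=
    Good.inv hU (fun n θ hθ => coer_isUnit hcR1 (co n θ hθ))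
      ⟨_, fun n θ hθ => coer_norm_inv hcR1 (co n θ hθ)⟩ h0
  have g2 : Good (interior Θ) 3 (fun n θ => (diagPart (Rmat x kern n θ)⁻¹)⁻¹) :=
    Good.inv hU (fun n θ hθ => coer_isUnit hc2 (cod n θ hθ))
      ⟨_, fun n θ hθ => coer_norm_inv hc2 (cod n θ hθ)⟩ (Good.diag hU g1)
  have g3 : Good (interior Θ) 3 (fun n θ => (Rmat x kern n θ)⁻¹ *
      ((diagPart ((Rmat x kern n θ)⁻¹))⁻¹) ^ 2 * (Rmat x kern n θ)⁻¹) := by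
    refine Good.mul hU (Good.mul hU g1 (Good.congr hU (Good.mul hU g2 g2) ?_)) g1
    intro n θ _
    rw [pow_two]
  obtain ⟨-, d1, g4⟩ := g3
  have d2 := fun j => (g4 j).2.1
  have g5 := fun j => (g4 j).2.2
  have d3 := fun j k => (g5 j k).2.1
  have g6 := fun j k => (g5 j k).2.2
  refine ⟨fun n θ j k l => fderiv ℝ (fun θ => fderiv ℝ (fun θ => fderiv ℝ (fun θ =>
      (Rmat x kern n θ)⁻¹ * ((diagPart ((Rmat x kern n θ)⁻¹))⁻¹) ^ 2 * (Rmat x kern n θ)⁻¹) θ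
      (EuclideanSpace.single j 1)) θ (EuclideanSpace.single k 1)) θ (EuclideanSpace.single l 1),
    fun n θ hθ j k l y => ?_, ?_⟩
  rotate_left
  · have g7 : ∀ q : Fin p × Fin p × Fin p, ∃ C : ℝ, _ := fun q => g6 q.1 q.2.1 q.2.2
    choose C hC using g7
    refine ⟨∑ q, |C q|, fun n θ hθ j k l => opBound_of_norm _ ?_⟩
    exact ((hC (j, k, l) n θ hθ).trans (le_abs_self _)).trans
      (Finset.single_le_sum (f := fun q => |C q|) (fun q _ => abs_nonneg _)
        (Finset.mem_univ (j, k, l)))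
  · exact pder_quad hU y (d3 j k n) (pder_quad hU y (d2 j n)
      (pder_quad hU y (d1 n) (fun θ _ => rfl) j) k) l θ hθ
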